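/- arXiv:math/9812171 — 3 statements merged into one kernel-verified Lean document; each statement's English description precedes it below -/
import Mathlib

section
/- Let φ : ℤ^a → ℤ^b be a ℤ-linear map, let Q be the cokernel of φ, and let I be a subset of {1,...,a} such that the images φ(e_i) for i ∈ I of the standard basis vectors form a basis of the real span of the image of φ. Then the cardinality of the torsion subgroup of Q is at most the product over i ∈ I of the Euclidean norms ‖φ(e_i)‖. -/
open scoped BigOperators
open Matrix Module

/-!
Let `L` be the image of `φ` and `S ⊇ L` the group of vectors having a nonzero multiple in `L`, so
that the torsion of the cokernel is `S / L`. The vectors `v i = φ (e i)`, `i ∈ I`, span a subgroup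
`N ≤ L` of finite index in `S`, and `S / N` surjects onto `S / L`. Passing from a basis of `S` to
the family `v` multiplies Gram determinants by `[S : N] ^ 2`. Since Gram determinants of integer
vectors are integers, `[S : N] ^ 2` divides the Gram determinant of `v`, which is positive and,
by Hadamard's inequality, at most `∏ i, ‖v i‖ ^ 2`.
-/

section Hadamard

variable {ι E : Type*} [Fintype ι] [DecidableEq ι] [NormedAddCommGroup E] [InnerProductSpace ℝ E]

theorem abs_det_orthonormalBasis_le_prod_norm (b : OrthonormalBasis ι ℝ E) (v : ι → E) :
    |b.toBasis.det v| ≤ ∏ i, ‖v i‖ := by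
  let e := Fintype.equivFin ι
  have : Fact (finrank ℝ E = Fintype.card ι) := ⟨finrank_eq_card_basis b.toBasis⟩
  have hadamard := (b.reindex e).toBasis.orientation.abs_volumeForm_apply_le (v ∘ e.symm)
  rw [Orientation.volumeForm_robust _ (b.reindex e) rfl, OrthonormalBasis.reindex_toBasis,
    Basis.det_reindex, Function.comp_assoc, e.symm_comp_self, Function.comp_id] at hadamard
  exact hadamard.trans_eq (e.symm.prod_comp fun i ↦ ‖v i‖)

theorem det_gram_eq_sq_det_orthonormalBasis (b : OrthonormalBasis ι ℝ E) (v : ι → E) :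
    (gram ℝ v).det = b.toBasis.det v ^ 2 := by
  rw [gram_eq_conjTranspose_mul b, det_mul, det_conjTranspose, star_trivial, ← sq]
  rfl

theorem det_gram_le_sq_prod_norm (v : ι → E) : (gram ℝ v).det ≤ (∏ i, ‖v i‖) ^ 2 := by
  by_cases hv : LinearIndependent ℝ v
  · let V := Submodule.span ℝ (Set.range v)
    let w : ι → V := fun i ↦ ⟨v i, Submodule.subset_span ⟨i, rfl⟩⟩
    have : FiniteDimensional ℝ V := FiniteDimensional.span_of_finite ℝ (Set.finite_range v)
    let b : OrthonormalBasis ι ℝ V := (stdOrthonormalBasis ℝ V).reindex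
      ((finCongr (finrank_span_eq_card hv)).trans (Fintype.equivFin ι).symm)
    calc (gram ℝ v).det = (gram ℝ w).det := rfl
      _ = |b.toBasis.det w| ^ 2 := by rw [det_gram_eq_sq_det_orthonormalBasis b, sq_abs]
      _ ≤ (∏ i, ‖v i‖) ^ 2 :=
        pow_le_pow_left₀ (abs_nonneg _) (abs_det_orthonormalBasis_le_prod_norm b w) 2
  · rw [not_imp_comm.1 det_gram_ne_zero_iff_linearIndependent.1 hv]
    positivity

end Hadamard

section BilinGram

variable {R M ι : Type*} [CommRing R] [AddCommGroup M] [Module R M]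

/-- The Gram matrix of a family of vectors with respect to a bilinear form, not necessarily
symmetric. It plays the role of `Matrix.gram` for forms with values in a ring such as `ℤ`. -/
def bilinGram (B : LinearMap.BilinForm R M) (v : ι → M) : Matrix ι ι R :=
  of fun i j ↦ B (v i) (v j)

variable [Fintype ι]

theorem bilinGram_eq_transpose_toMatrix_mul (B : LinearMap.BilinForm R M) (b : Basis ι R M)
    (v : ι → M) : bilinGram B v = (b.toMatrix v)ᵀ * bilinGram B b * b.toMatrix v := by
  ext i j
  rw [bilinGram, of_apply, ← b.sum_toMatrix_smul_self v i, ← b.sum_toMatrix_smul_self v j]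
  simp only [map_sum, map_smul, LinearMap.sum_apply, LinearMap.smul_apply, smul_eq_mul,
    Matrix.mul_apply, transpose_apply, bilinGram, of_apply, Finset.sum_mul, Finset.mul_sum]
  exact Finset.sum_congr rfl fun _ _ ↦ Finset.sum_congr rfl fun _ _ ↦ by ring

variable [DecidableEq ι]

theorem det_bilinGram_eq_sq_det_mul (B : LinearMap.BilinForm R M) (b : Basis ι R M)
    (v : ι → M) : (bilinGram B v).det = b.det v ^ 2 * (bilinGram B b).det := by
  rw [bilinGram_eq_transpose_toMatrix_mul B b, det_mul, det_mul, det_transpose, b.det_apply]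
  ring

theorem linearIndependent_of_det_bilinGram_ne_zero [IsDomain R] {B : LinearMap.BilinForm R M}
    {v : ι → M} (hv : (bilinGram B v).det ≠ 0) : LinearIndependent R v := by
  rw [Fintype.linearIndependent_iff]
  intro c hc
  refine congrFun (eq_zero_of_vecMul_eq_zero hv (funext fun j ↦ ?_))
  calc (c ᵥ* bilinGram B v) j = B (∑ i, c i • v i) (v j) := by
        simp [vecMul, dotProduct, bilinGram]
    _ = 0 := by rw [hc, map_zero, LinearMap.zero_apply]

/-- By Cramer's rule the sum is `det` times the orthogonal projection of `x` to the span of `v`. -/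
theorem bilin_sum_adjugate_mulVec_smul (B : LinearMap.BilinForm R M) (v : ι → M) (x : M) (j : ι) :
    B (v j) (∑ i, ((bilinGram B v).adjugate *ᵥ fun k ↦ B (v k) x) i • v i) =
      B (v j) ((bilinGram B v).det • x) := by
  set y : ι → R := fun k ↦ B (v k) x
  calc _ = (bilinGram B v *ᵥ ((bilinGram B v).adjugate *ᵥ y)) j := by
        simp [mulVec, dotProduct, bilinGram, mul_comm]
    _ = B (v j) ((bilinGram B v).det • x) := by
        simp [mulVec_mulVec, mul_adjugate, smul_mulVec, y]

end BilinGram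

section Torsion

variable {R M ι : Type*} [CommRing R] [AddCommGroup M] [Module R M]

theorem finrank_eq_card_of_isTorsion_quotient_span [IsDomain R] [Module.Finite R M] [Fintype ι]
    {v : ι → M} (hv : LinearIndependent R v)
    (htors : IsTorsion R (M ⧸ Submodule.span R (Set.range v))) :
    finrank R M = Fintype.card ι := by
  rw [← Submodule.finrank_quotient_add_finrank (Submodule.span R (Set.range v)),
    finrank_eq_zero_iff_isTorsion.2 htors, finrank_span_eq_card hv, zero_add]

/-- The saturation of a submodule `L`: the vectors having a multiple in `L` by a non-zero-divisor,
so that `saturation L / L` is the torsion of `M / L`. -/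
def saturation (L : Submodule R M) : Submodule R M :=
  (Submodule.torsion R (M ⧸ L)).comap L.mkQ

theorem mem_saturation_iff {L : Submodule R M} {x : M} :
    x ∈ saturation L ↔ ∃ r ∈ nonZeroDivisors R, r • x ∈ L := by
  simp only [saturation, Submodule.mem_comap, Submodule.mem_torsion_iff, Subtype.exists,
    Submonoid.mk_smul, Submodule.mkQ_apply, ← Submodule.Quotient.mk_smul,
    Submodule.Quotient.mk_eq_zero, exists_prop]

theorem le_saturation (L : Submodule R M) : L ≤ saturation L := fun x hx ↦
  mem_saturation_iff.2 ⟨1, one_mem _, by rwa [one_smul]⟩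

theorem isTorsion_saturation_quotient_span {L : Submodule R M} {v : ι → saturation L}
    (hL : ∀ x ∈ L, ∃ r ∈ nonZeroDivisors R,
      r • x ∈ Submodule.span R (Set.range fun i ↦ (v i : M))) :
    IsTorsion R (saturation L ⧸ Submodule.span R (Set.range v)) := by
  intro q
  obtain ⟨x, rfl⟩ := Submodule.Quotient.mk_surjective _ q
  obtain ⟨r, hr, hrx⟩ := mem_saturation_iff.1 x.2
  obtain ⟨s, hs, hsrx⟩ := hL _ hrx
  refine ⟨⟨s * r, mul_mem hs hr⟩, ?_⟩
  rw [Submonoid.mk_smul, ← Submodule.Quotient.mk_smul, Submodule.Quotient.mk_eq_zero,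
    ← Submodule.apply_mem_span_image_iff_mem_span (saturation L).injective_subtype,
    ← Set.range_comp, map_smul, mul_smul]
  exact hsrx

theorem card_torsion_quotient_dvd_card_saturation_quotient {L : Submodule R M}
    {N : Submodule R (saturation L)} (hN : N ≤ L.comap (saturation L).subtype) :
    Nat.card (Submodule.torsion R (M ⧸ L)) ∣ Nat.card (saturation L ⧸ N) := by
  let g : saturation L →ₗ[R] Submodule.torsion R (M ⧸ L) := L.mkQ.restrict fun _ hx ↦ hx
  have hNg : N ≤ LinearMap.ker g := fun x hx ↦
    Subtype.ext ((Submodule.Quotient.mk_eq_zero L).2 (hN hx))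
  refine AddSubgroup.card_dvd_of_surjective (N.liftQ g hNg).toAddMonoidHom ?_
  rintro ⟨q, hq⟩
  obtain ⟨x, rfl⟩ := L.mkQ_surjective q
  exact ⟨Submodule.Quotient.mk ⟨x, hq⟩, rfl⟩

end Torsion

section IntegralForm

variable {M ι : Type*} [AddCommGroup M] [Module.Finite ℤ M] [IsTorsionFree ℤ M] [Fintype ι]
  [DecidableEq ι]

theorem sq_card_quotient_span_dvd_det_bilinGram (B : LinearMap.BilinForm ℤ M) (v : ι → M)
    (htors : IsTorsion ℤ (M ⧸ Submodule.span ℤ (Set.range v))) :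
    (Nat.card (M ⧸ Submodule.span ℤ (Set.range v)) : ℤ) ^ 2 ∣ (bilinGram B v).det := by
  by_cases hdet : (bilinGram B v).det = 0
  · exact hdet ▸ dvd_zero _
  have hv := linearIndependent_of_det_bilinGram_ne_zero hdet
  let b : Basis ι ℤ M :=
    (finBasisOfFinrankEq ℤ M (finrank_eq_card_of_isTorsion_quotient_span hv htors)).reindex
      (Fintype.equivFin ι).symm
  have hindex : (b.det v).natAbs = Nat.card (M ⧸ Submodule.span ℤ (Set.range v)) := by
    rw [← Submodule.natAbs_det_basis_change b _ (Basis.span hv)]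
    congr 2
    exact funext fun i ↦ congrArg Subtype.val (Basis.span_apply hv i).symm
  rw [← hindex, Int.natCast_natAbs, sq_abs, det_bilinGram_eq_sq_det_mul B b]
  exact dvd_mul_right _ _

theorem sq_card_torsion_quotient_dvd_det_bilinGram (B : LinearMap.BilinForm ℤ M)
    {L : Submodule ℤ M} {v : ι → M} (hvL : ∀ i, v i ∈ L)
    (hL : ∀ x ∈ L, ∃ n ∈ nonZeroDivisors ℤ, n • x ∈ Submodule.span ℤ (Set.range v)) :
    (Nat.card (Submodule.torsion ℤ (M ⧸ L)) : ℤ) ^ 2 ∣ (bilinGram B v).det := by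
  let w : ι → saturation L := fun i ↦ ⟨v i, le_saturation L (hvL i)⟩
  have hspan : Submodule.span ℤ (Set.range w) ≤ L.comap (saturation L).subtype :=
    Submodule.span_le.2 (Set.range_subset_iff.2 hvL)
  have hcard := card_torsion_quotient_dvd_card_saturation_quotient hspan
  calc (Nat.card (Submodule.torsion ℤ (M ⧸ L)) : ℤ) ^ 2
      ∣ (Nat.card (saturation L ⧸ Submodule.span ℤ (Set.range w)) : ℤ) ^ 2 :=
        pow_dvd_pow_of_dvd (Int.natCast_dvd_natCast.2 hcard) 2
    _ ∣ (bilinGram (B.restrict (saturation L)) w).det :=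
        sq_card_quotient_span_dvd_det_bilinGram _ w (isTorsion_saturation_quotient_span hL)
    _ = (bilinGram B v).det := rfl

end IntegralForm

section IntegralLattice

variable {M ι E : Type*} [AddCommGroup M] [NormedAddCommGroup E] [InnerProductSpace ℝ E]
  [Fintype ι] {f : M →ₗ[ℤ] E} {B : LinearMap.BilinForm ℤ M}

theorem intCast_det_bilinGram [DecidableEq ι]
    (hB : ∀ x y, (B x y : ℝ) = inner ℝ (f x) (f y)) (v : ι → M) :
    ((bilinGram B v).det : ℝ) = (gram ℝ (f ∘ v)).det := by
  rw [Int.cast_det]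
  exact congrArg det (ext fun i j ↦ hB (v i) (v j))

theorem det_bilinGram_smul_mem_span [DecidableEq ι]
    (hB : ∀ x y, (B x y : ℝ) = inner ℝ (f x) (f y)) (hf : Function.Injective f)
    {v : ι → M} {x : M} (hx : f x ∈ Submodule.span ℝ (Set.range (f ∘ v))) :
    (bilinGram B v).det • x ∈ Submodule.span ℤ (Set.range v) := by
  let z := ∑ i, ((bilinGram B v).adjugate *ᵥ fun k ↦ B (v k) x) i • v i
  let y := (bilinGram B v).det • x - z
  have hfy_mem : f y ∈ Submodule.span ℝ (Set.range (f ∘ v)) := by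
    simp only [y, z, map_sub, map_sum, map_smul]
    exact sub_mem (zsmul_mem hx _)
      (sum_mem fun i _ ↦ zsmul_mem (Submodule.subset_span (Set.mem_range_self i)) _)
  have hspan_le : Submodule.span ℝ (Set.range (f ∘ v)) ≤ (ℝ ∙ f y)ᗮ := by
    refine Submodule.span_le.2 (Set.range_subset_iff.2 fun j ↦ ?_)
    rw [SetLike.mem_coe, Submodule.mem_orthogonal_singleton_iff_inner_left, Function.comp_apply,
      ← hB, map_sub, bilin_sum_adjugate_mulVec_smul, sub_self, Int.cast_zero]
  have hfy : f y = 0 :=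
    inner_self_eq_zero.1 (Submodule.mem_orthogonal_singleton_iff_inner_left.1 (hspan_le hfy_mem))
  rw [sub_eq_zero.1 (hf (hfy.trans (map_zero f).symm))]
  exact sum_mem fun i _ ↦ Submodule.smul_mem _ _ (Submodule.subset_span ⟨i, rfl⟩)

theorem stmt_0_general [Module.Finite ℤ M] (hf : Function.Injective f)
    (hB : ∀ x y, (B x y : ℝ) = inner ℝ (f x) (f y)) {L : Submodule ℤ M} {v : ι → M}
    (hvL : ∀ i, v i ∈ L) (hind : LinearIndependent ℝ (f ∘ v))
    (hspan : ∀ x ∈ L, f x ∈ Submodule.span ℝ (Set.range (f ∘ v))) :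
    (Nat.card (Submodule.torsion ℤ (M ⧸ L)) : ℝ) ≤ ∏ i, ‖f (v i)‖ := by
  classical
  have : IsTorsionFree ℤ E := .trans_faithfulSMul ℤ ℝ E
  have : IsTorsionFree ℤ M := hf.moduleIsTorsionFree f (map_smul f)
  have hdet_pos : 0 < (bilinGram B v).det := by
    rw [← Int.cast_pos (R := ℝ), intCast_det_bilinGram hB]
    exact (posDef_gram_of_linearIndependent hind).det_pos
  have hdvd := sq_card_torsion_quotient_dvd_det_bilinGram B hvL fun x hx ↦
    ⟨_, mem_nonZeroDivisors_of_ne_zero hdet_pos.ne',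
      det_bilinGram_smul_mem_span hB hf (hspan x hx)⟩
  refine le_of_sq_le_sq ?_ (Finset.prod_nonneg fun i _ ↦ norm_nonneg (f (v i)))
  calc (Nat.card (Submodule.torsion ℤ (M ⧸ L)) : ℝ) ^ 2
      ≤ (bilinGram B v).det := mod_cast Int.le_of_dvd hdet_pos hdvd
    _ = (gram ℝ (f ∘ v)).det := intCast_det_bilinGram hB v
    _ ≤ (∏ i, ‖f (v i)‖) ^ 2 := det_gram_le_sq_prod_norm (f ∘ v)

end IntegralLattice

section EuclideanCast

variable {κ : Type*}

/-- The coordinatewise inclusion of the standard lattice `ℤ^κ` into Euclidean space `ℝ^κ`, which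
supplies the Euclidean norms of integer vectors. -/
def intVecToEuclidean : (κ → ℤ) →ₗ[ℤ] EuclideanSpace ℝ κ :=
  (WithLp.linearEquiv 2 ℤ (κ → ℝ)).symm.toLinearMap ∘ₗ (Algebra.linearMap ℤ ℝ).compLeft κ

theorem intVecToEuclidean_injective :
    Function.Injective (intVecToEuclidean : (κ → ℤ) → EuclideanSpace ℝ κ) := fun _ _ h ↦
  funext fun j ↦ Int.cast_injective (α := ℝ) (congrArg (fun z ↦ z j) h)

variable {ι : Type*} {v : ι → κ → ℤ}

theorem linearIndependent_intVecToEuclidean_comp_iff :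
    LinearIndependent ℝ (intVecToEuclidean ∘ v) ↔ LinearIndependent ℝ fun i j ↦ (v i j : ℝ) :=
  (WithLp.linearEquiv 2 ℝ (κ → ℝ)).symm.toLinearMap.linearIndependent_iff (LinearEquiv.ker _)

theorem intVecToEuclidean_mem_span_range_comp_iff {x : κ → ℤ} :
    intVecToEuclidean x ∈ Submodule.span ℝ (Set.range (intVecToEuclidean ∘ v)) ↔
      (fun j ↦ (x j : ℝ)) ∈ Submodule.span ℝ (Set.range fun i j ↦ (v i j : ℝ)) := by
  rw [← Submodule.apply_mem_span_image_iff_mem_span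
    (f := (WithLp.linearEquiv 2 ℝ (κ → ℝ)).symm.toLinearMap) (LinearEquiv.injective _),
    ← Set.range_comp]
  rfl

variable [Fintype κ]

theorem intCast_dotProduct_eq_inner (x y : κ → ℤ) :
    ((dotProductBilin ℤ ℤ x y : ℤ) : ℝ) = inner ℝ (intVecToEuclidean x) (intVecToEuclidean y) := by
  simp [intVecToEuclidean, dotProduct, PiLp.inner_apply, mul_comm]

theorem norm_intVecToEuclidean (x : κ → ℤ) :
    ‖intVecToEuclidean x‖ = √(∑ j, (x j : ℝ) ^ 2) := by
  simp [EuclideanSpace.norm_eq, intVecToEuclidean]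

end EuclideanCast

theorem stmt_0 (a b : ℕ) (ha : 0 < a) (hb : 0 < b)
    (φ : (Fin a → ℤ) →ₗ[ℤ] (Fin b → ℤ))
    (I : Finset (Fin a))
    (hind : LinearIndependent ℝ
      (fun i : I => (fun j => ((φ (Pi.single (i : Fin a) 1)) j : ℝ) : Fin b → ℝ)))
    (hspan : Submodule.span ℝ
        (Set.range (fun i : I => (fun j => ((φ (Pi.single (i : Fin a) 1)) j : ℝ) : Fin b → ℝ)))
      = Submodule.span ℝ
        ((fun x : Fin b → ℤ => (fun j => (x j : ℝ) : Fin b → ℝ)) '' (LinearMap.range φ))) :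
    (Nat.card (Submodule.torsion ℤ ((Fin b → ℤ) ⧸ LinearMap.range φ)) : ℝ)
      ≤ ∏ i ∈ I, Real.sqrt (∑ j, ((φ (Pi.single i 1)) j : ℝ) ^ 2) := by
  have hbound := stmt_0_general intVecToEuclidean_injective intCast_dotProduct_eq_inner
    (fun i : I ↦ LinearMap.mem_range_self φ (Pi.single i 1))
    (linearIndependent_intVecToEuclidean_comp_iff.2 hind)
    fun x hx ↦ intVecToEuclidean_mem_span_range_comp_iff.2
      (hspan ▸ Submodule.subset_span (Set.mem_image_of_mem _ hx))
  simpa only [norm_intVecToEuclidean,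
    Finset.prod_coe_sort I fun i ↦ √(∑ j, (φ (Pi.single i 1) j : ℝ) ^ 2)] using hbound
end

section
/- Let N ≥ 2 and define A(N) = N^{N−1} · γ^{N/2}, where γ = γ(N) is the Hermite constant in dimension N. Let A be a positive definite real N×N symmetric matrix with μ(A) = 1 whose set of minimal vectors m(A) spans ℝ^N. Then there exists g ∈ SL_N(ℤ) such that every minimal vector v of gᵀAg has all coordinates bounded in absolute value by A(N). -/
open scoped Matrix

/-!
Let `V` be a matrix of `N` independent integral vectors with `vᵀAv ≤ 1`, and `d = det V`. The
lattice `(adj V) ℤ^N` contains `d ℤ^N`; eliminating one coordinate at a time and reducing the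
remaining ones modulo `d` produces a basis of it whose entries are at most `|d|`. Its preimage is a
basis of `ℤ^N` in which every vector is a combination of the columns of `V` with coefficients in
`[-1, 1]`, so the triangle inequality bounds its `A`-norm by `N`. If `M` is the Gram matrix of this
basis, Cramer's rule and Hadamard's inequality give `x_i² det M ≤ (xᵀMx) ∏_{j ≠ i} M_jj`, and the
definition of the Hermite constant bounds `1 / det M = 1 / det A` by `γ^N`.
-/

open Matrix

section BoundedGenerators

/-- The inclusion of `R^n` into `R^(n+1)` as the vectors with vanishing `0`-th coordinate, along
which lattices in `R^(n+1)` are cut down to `R^n`. -/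
def consZero (R : Type*) [Semiring R] (n : ℕ) : (Fin n → R) →ₗ[R] (Fin (n + 1) → R) :=
  (Fin.consLinearEquiv R fun _ : Fin (n + 1) ↦ R).toLinearMap ∘ₗ LinearMap.inr R R (Fin n → R)

theorem consZero_apply {R : Type*} [Semiring R] {n : ℕ} (x : Fin n → R) :
    consZero R n x = Fin.cons 0 x :=
  rfl

theorem span_singleton_sup_map_comap_consZero {R : Type*} [CommRing R] {n : ℕ}
    {L : Submodule R (Fin (n + 1) → R)} {b : Fin (n + 1) → R} (hb : b ∈ L)
    (hdvd : ∀ x ∈ L, b 0 ∣ x 0) :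
    Submodule.span R {b} ⊔ (L.comap (consZero R n)).map (consZero R n) = L := by
  refine le_antisymm (sup_le ?_ (Submodule.map_comap_le _ L)) fun x hx ↦ ?_
  · exact (Submodule.span_singleton_le_iff_mem b L).mpr hb
  obtain ⟨k, hk⟩ := hdvd x hx
  have hcons : consZero R n (Fin.tail (x - k • b)) = x - k • b := by
    ext j
    cases j using Fin.cases <;> simp [consZero_apply, Fin.tail, hk, mul_comm]
  have hmem : consZero R n (Fin.tail (x - k • b)) ∈ L :=
    hcons ▸ L.sub_mem hx (L.smul_mem k hb)
  exact Submodule.mem_sup.mpr ⟨k • b, Submodule.mem_span_singleton.mpr ⟨k, rfl⟩, x - k • b,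
    ⟨_, hmem, hcons⟩, by abel⟩

theorem exists_mem_forall_dvd_and_abs_le {n : ℕ} {d : ℤ} (hd : d ≠ 0)
    (L : Submodule ℤ (Fin (n + 1) → ℤ)) (hL : ∀ x, d • x ∈ L) :
    ∃ b ∈ L, (∀ x ∈ L, b 0 ∣ x 0) ∧ ∀ j, |b j| ≤ |d| := by
  let I : Ideal ℤ := L.map (LinearMap.proj 0)
  obtain ⟨a, haL, ha⟩ : ∃ a ∈ L, a 0 = Submodule.IsPrincipal.generator I :=
    Submodule.mem_map.mp (Submodule.IsPrincipal.generator_mem I)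
  have a_dvd (x) (hx : x ∈ L) : a 0 ∣ x 0 :=
    ha ▸ (Submodule.IsPrincipal.mem_iff_generator_dvd I).mp (Submodule.mem_map_of_mem hx)
  have a_dvd_d : a 0 ∣ d := by simpa using a_dvd _ (hL 1)
  let b : Fin (n + 1) → ℤ := Fin.cons (a 0) fun j ↦ a j.succ % d
  have hb : b = a - d • Fin.cons 0 fun j ↦ a j.succ / d := by
    ext j
    cases j using Fin.cases <;> simp [b, Int.emod_def]
  refine ⟨b, hb ▸ L.sub_mem haL (hL _), a_dvd, Fin.cases ?_ fun j ↦ ?_⟩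
  · exact Int.le_of_dvd (abs_pos.mpr hd) ((abs_dvd_abs _ _).mpr a_dvd_d)
  · simpa [b, abs_of_nonneg (Int.emod_nonneg _ hd)] using (Int.emod_lt_abs _ hd).le

theorem exists_span_range_eq_and_abs_le {n : ℕ} {d : ℤ} (hd : d ≠ 0)
    (L : Submodule ℤ (Fin n → ℤ)) (hL : ∀ x, d • x ∈ L) :
    ∃ b : Fin n → Fin n → ℤ, Submodule.span ℤ (Set.range b) = L ∧ ∀ i j, |b i j| ≤ |d| := by
  induction n with
  | zero => exact ⟨0, Subsingleton.elim _ _, finZeroElim⟩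
  | succ n ih =>
    obtain ⟨b, hbL, b_dvd, hb⟩ := exists_mem_forall_dvd_and_abs_le hd L hL
    obtain ⟨c, hcL, hc⟩ := ih (L.comap (consZero ℤ n)) fun x ↦ by
      simpa only [Submodule.mem_comap, map_smul] using hL (consZero ℤ n x)
    refine ⟨Fin.cons b (consZero ℤ n ∘ c), ?_, Fin.cases hb fun i ↦ Fin.cases ?_ (hc i)⟩
    · rw [Fin.range_cons, Submodule.span_insert, Set.range_comp, Submodule.span_image, hcL,
        span_singleton_sup_map_comap_consZero hbL b_dvd]
    · simp [consZero_apply]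

end BoundedGenerators

section ReducedBasis

theorem isUnit_of_span_range_col_eq_top {ι R : Type*} [Fintype ι] [DecidableEq ι] [CommRing R]
    {E : Matrix ι ι R} (hE : Submodule.span R (Set.range E.col) = ⊤) : IsUnit E := by
  rw [← range_mulVecLin, LinearMap.range_eq_top] at hE
  exact mulVec_surjective_iff_isUnit.mp hE

theorem exists_isUnit_abs_adjugate_mul_le {n : ℕ} {V : Matrix (Fin n) (Fin n) ℤ}
    (hV : V.det ≠ 0) :
    ∃ E : Matrix (Fin n) (Fin n) ℤ, IsUnit E ∧ ∀ i j, |(V.adjugate * E) i j| ≤ |V.det| := by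
  let f := V.adjugate.mulVecLin
  have det_smul_mem (x) : V.det • x ∈ f.range :=
    ⟨V *ᵥ x, by simp [f, mulVec_mulVec, adjugate_mul]⟩
  have f_injective : Function.Injective f := by
    refine Function.LeftInverse.injective (g := fun y ↦ (V *ᵥ y) / fun _ ↦ V.det) fun x ↦ ?_
    ext i
    simp [f, mulVec_mulVec, mul_adjugate, hV]
  obtain ⟨b, hb, hb_le⟩ := exists_span_range_eq_and_abs_le hV f.range det_smul_mem
  choose e he using fun j ↦ hb.le (Submodule.subset_span ⟨j, rfl⟩)
  refine ⟨(of e)ᵀ, isUnit_of_span_range_col_eq_top ?_, fun i j ↦ ?_⟩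
  · apply Submodule.map_injective_of_injective f_injective
    rw [Submodule.map_span, ← Set.range_comp, Submodule.map_top, ← hb]
    exact congrArg (Submodule.span ℤ <| Set.range ·) (funext he)
  · exact (congrArg abs (congrFun (he j) i)).trans_le (hb_le j i)

theorem exists_specialLinearGroup_col_eq_or_eq_neg {ι : Type*} [Fintype ι] [DecidableEq ι]
    {E : Matrix ι ι ℤ} (hE : IsUnit E) :
    ∃ g : SpecialLinearGroup ι ℤ, ∀ j, g.1.col j = E.col j ∨ g.1.col j = -E.col j := by
  rcases Int.isUnit_iff.mp ((isUnit_iff_isUnit_det E).mp hE) with hdet | hdet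
  · exact ⟨⟨E, hdet⟩, fun _ ↦ .inl rfl⟩
  · obtain ⟨k⟩ : Nonempty ι := by
      by_contra! h
      simp [det_isEmpty] at hdet
    refine ⟨⟨E.updateCol k (-1 • E.col k), ?_⟩, fun j ↦ ?_⟩
    · have hself : E.updateCol k (E.col k) = E := updateCol_eq_self E k
      rw [det_updateCol_smul, hself, hdet, neg_one_mul, neg_neg]
    · rcases eq_or_ne j k with rfl | hjk
      · exact .inr (funext fun i ↦ by simp)
      · exact .inl (funext fun i ↦ by simp [hjk])

theorem exists_specialLinearGroup_abs_adjugate_mul_le {n : ℕ} {V : Matrix (Fin n) (Fin n) ℤ}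
    (hV : V.det ≠ 0) :
    ∃ g : SpecialLinearGroup (Fin n) ℤ, ∀ i j, |(V.adjugate * g.1) i j| ≤ |V.det| := by
  obtain ⟨E, hE, hE_le⟩ := exists_isUnit_abs_adjugate_mul_le hV
  obtain ⟨g, hg⟩ := exists_specialLinearGroup_col_eq_or_eq_neg hE
  refine ⟨g, fun i j ↦ (le_of_eq ?_).trans (hE_le i j)⟩
  change |V.adjugate i ⬝ᵥ g.1.col j| = |V.adjugate i ⬝ᵥ E.col j|
  rcases hg j with h | h <;> simp only [h, dotProduct_neg, abs_neg]

theorem exists_det_ne_zero_forall_col_mem {n : ℕ} (K : Type*) [Field K] [CharZero K]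
    {S : Set (Fin n → ℤ)}
    (hS : Submodule.span K ((fun (v : Fin n → ℤ) i ↦ (v i : K)) '' S) = ⊤) :
    ∃ V : Matrix (Fin n) (Fin n) ℤ, V.det ≠ 0 ∧ ∀ j, V.col j ∈ S := by
  have hindep := Submodule.exists_fun_fin_finrank_span_eq K
    ((fun (v : Fin n → ℤ) i ↦ (v i : K)) '' S)
  rw [hS, finrank_top, Module.finrank_fin_fun] at hindep
  obtain ⟨f, hfS, -, hf⟩ := hindep
  choose v hvS hvf using hfS
  refine ⟨(of v)ᵀ, fun hdet ↦ ?_, hvS⟩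
  have hunit : IsUnit ((of v)ᵀ.map (Int.cast : ℤ → K)) := by
    rw [← linearIndependent_cols_iff_isUnit]
    exact (show ((of v)ᵀ.map (Int.cast : ℤ → K)).col = f from funext hvf) ▸ hf
  rw [isUnit_iff_isUnit_det, ← Int.cast_det, hdet, Int.cast_zero] at hunit
  exact not_isUnit_zero hunit

end ReducedBasis

section PosSemidef

variable {ι : Type*} [Fintype ι] {M : Matrix ι ι ℝ}

theorem exists_gram_eq_of_posSemidef (hM : M.PosSemidef) :
    ∃ v : ι → EuclideanSpace ℝ ι, gram ℝ v = M := by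
  classical
  obtain ⟨B, rfl⟩ : ∃ B : Matrix ι ι ℝ, M = star B * B := by
    open scoped MatrixOrder in
    exact CStarAlgebra.nonneg_iff_eq_star_mul_self.mp hM.nonneg
  exact ⟨fun j ↦ WithLp.toLp 2 (B.col j), gram_eq_conjTranspose_mul (EuclideanSpace.basisFun ι ℝ) _⟩

theorem dotProduct_mulVec_le_card_mul_sq (hM : M.PosSemidef) (hdiag : ∀ i, M i i ≤ 1) {c : ι → ℝ}
    {r : ℝ} (hc : ∀ i, |c i| ≤ r) : c ⬝ᵥ M *ᵥ c ≤ (Fintype.card ι * r) ^ 2 := by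
  obtain ⟨v, rfl⟩ := exists_gram_eq_of_posSemidef hM
  have norm_v_le (i) : ‖v i‖ ≤ 1 := by
    simpa [gram_apply] using hdiag i
  have norm_combination_le : ‖∑ i, c i • v i‖ ≤ Fintype.card ι * r := by
    calc ‖∑ i, c i • v i‖ ≤ ∑ i, |c i| * ‖v i‖ :=
          norm_sum_le_of_le _ fun i _ ↦ (norm_smul (c i) (v i)).le
      _ ≤ ∑ _i : ι, r := by
          gcongr with i
          exact (mul_le_of_le_one_right (abs_nonneg _) (norm_v_le i)).trans (hc i)
      _ = Fintype.card ι * r := by simp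
  calc c ⬝ᵥ gram ℝ v *ᵥ c = ‖∑ i, c i • v i‖ ^ 2 := by
        rw [← real_inner_self_eq_norm_sq, ← star_dotProduct_gram_mulVec, star_trivial]
    _ ≤ (Fintype.card ι * r) ^ 2 := by gcongr

theorem det_gram_le_prod_norm_sq {n : ℕ} {E : Type*} [NormedAddCommGroup E]
    [InnerProductSpace ℝ E] (b : OrthonormalBasis (Fin n) ℝ E) (v : Fin n → E) :
    (gram ℝ v).det ≤ ∏ i, ‖v i‖ ^ 2 := by
  have : Fact (Module.finrank ℝ E = n) := ⟨by simp [Module.finrank_eq_card_basis b.toBasis]⟩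
  have hvol : (gram ℝ v).det = |b.toBasis.orientation.volumeForm v| ^ 2 := by
    rw [gram_eq_conjTranspose_mul b, det_mul, det_conjTranspose, star_trivial, ← sq,
      Orientation.volumeForm_robust' _ b, sq_abs, Module.Basis.det_apply]
    rfl
  rw [hvol, Finset.prod_pow]
  gcongr
  exact b.toBasis.orientation.abs_volumeForm_apply_le v

variable [DecidableEq ι]

theorem det_le_prod_diag (hM : M.PosSemidef) : M.det ≤ ∏ i, M i i := by
  let e := (Fintype.equivFin ι).symm
  obtain ⟨v, hv⟩ := exists_gram_eq_of_posSemidef (hM.submatrix e)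
  have hdiag (k) : ‖v k‖ ^ 2 = M (e k) (e k) := by
    rw [← real_inner_self_eq_norm_sq, ← gram_apply, hv, submatrix_apply]
  calc M.det = (gram ℝ v).det := by rw [hv, det_submatrix_equiv_self]
    _ ≤ ∏ k, ‖v k‖ ^ 2 := det_gram_le_prod_norm_sq (EuclideanSpace.basisFun _ ℝ) v
    _ = ∏ i, M i i := by simp only [hdiag, e.prod_comp fun i ↦ M i i]

theorem sq_mul_det_le_dotProduct_mulVec_mul_prod (hM : M.PosSemidef) (x : ι → ℝ) (i : ι) :
    x i ^ 2 * M.det ≤ (x ⬝ᵥ M *ᵥ x) * ∏ j ∈ Finset.univ.erase i, M j j := by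
  -- `Wᵀ * M * W` is the Gram matrix of the standard basis with its `i`-th vector replaced by `x`.
  let W : Matrix ι ι ℝ := updateCol 1 i x
  have det_W : W.det = x i := by rw [← cramer_apply, cramer_one, Module.End.one_apply]
  have diag_self : (Wᵀ * M * W) i i = x ⬝ᵥ M *ᵥ x := by
    rw [mul_mul_apply, show Wᵀ i = x from funext fun _ ↦ updateCol_self]
  have diag_ne (j) (hj : j ≠ i) : (Wᵀ * M * W) j j = M j j := by
    have : Wᵀ j = Pi.single j 1 := by
      ext k
      simp [W, hj, one_apply, Pi.single_apply]
    simp [mul_mul_apply, this]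
  have hW : (Wᵀ * M * W).PosSemidef := by simpa using hM.conjTranspose_mul_mul_same W
  calc x i ^ 2 * M.det = (Wᵀ * M * W).det := by
        rw [det_mul, det_mul, det_transpose, det_W]
        ring
    _ ≤ ∏ j, (Wᵀ * M * W) j j := det_le_prod_diag hW
    _ = (x ⬝ᵥ M *ᵥ x) * ∏ j ∈ Finset.univ.erase i, M j j := by
        rw [← Finset.mul_prod_erase _ _ (Finset.mem_univ i), diag_self]
        exact congrArg _ (Finset.prod_congr rfl fun j hj ↦ diag_ne j (Finset.ne_of_mem_erase hj))

theorem abs_le_pow_div_sqrt_det (hM : M.PosDef) {r : ℝ} (hr : 0 ≤ r) (hdiag : ∀ j, M j j ≤ r ^ 2)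
    {x : ι → ℝ} (hx : x ⬝ᵥ M *ᵥ x ≤ 1) (i : ι) :
    |x i| ≤ r ^ (Fintype.card ι - 1) / √M.det := by
  have prod_nonneg : 0 ≤ ∏ j ∈ Finset.univ.erase i, M j j :=
    Finset.prod_nonneg fun _ _ ↦ hM.posSemidef.diag_nonneg
  have prod_le : ∏ j ∈ Finset.univ.erase i, M j j ≤ (r ^ 2) ^ (Fintype.card ι - 1) := by
    simpa using Finset.prod_le_prod (s := Finset.univ.erase i)
      (fun _ _ ↦ hM.posSemidef.diag_nonneg) fun j _ ↦ hdiag j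
  have hsq : (|x i| * √M.det) ^ 2 ≤ (r ^ (Fintype.card ι - 1)) ^ 2 :=
    calc (|x i| * √M.det) ^ 2 = x i ^ 2 * M.det := by
          rw [mul_pow, sq_abs, Real.sq_sqrt hM.det_pos.le]
      _ ≤ (x ⬝ᵥ M *ᵥ x) * ∏ j ∈ Finset.univ.erase i, M j j :=
          sq_mul_det_le_dotProduct_mulVec_mul_prod hM.posSemidef x i
      _ ≤ ∏ j ∈ Finset.univ.erase i, M j j := mul_le_of_le_one_left prod_nonneg hx
      _ ≤ (r ^ (Fintype.card ι - 1)) ^ 2 := by rwa [pow_right_comm]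
  rw [le_div_iff₀ (Real.sqrt_pos.mpr hM.det_pos)]
  exact le_of_sq_le_sq hsq (by positivity)

end PosSemidef

theorem exists_specialLinearGroup_diag_le_sq {n : ℕ} {A : Matrix (Fin n) (Fin n) ℝ}
    (hA : A.PosSemidef) {V : Matrix (Fin n) (Fin n) ℤ} (hV : V.det ≠ 0)
    (hdiag : ∀ j, ((V.map (Int.cast : ℤ → ℝ))ᵀ * A * V.map (Int.cast : ℤ → ℝ)) j j ≤ 1) :
    ∃ g : SpecialLinearGroup (Fin n) ℤ,
      ∀ j, ((g.1.map (Int.cast : ℤ → ℝ))ᵀ * A * g.1.map (Int.cast : ℤ → ℝ)) j j ≤ (n : ℝ) ^ 2 := by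
  obtain ⟨g, hg⟩ := exists_specialLinearGroup_abs_adjugate_mul_le hV
  refine ⟨g, fun j ↦ ?_⟩
  set P := V.map (Int.cast : ℤ → ℝ)
  set G := g.1.map (Int.cast : ℤ → ℝ)
  set C := (V.adjugate * g.1).map (Int.cast : ℤ → ℝ)
  have hPC : P * C = (V.det : ℝ) • G := by
    have h : V * (V.adjugate * g.1) = V.det • g.1 := by
      rw [← Matrix.mul_assoc, mul_adjugate, smul_mul, Matrix.one_mul]
    rw [← Matrix.map_mul_intCast, h]
    ext
    simp only [G, map_apply, Matrix.smul_apply, smul_eq_mul, Int.cast_mul]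
  have hdet : (0 : ℝ) < (V.det : ℝ) ^ 2 := by positivity
  have hPAP : (Pᵀ * A * P).PosSemidef := by simpa using hA.conjTranspose_mul_mul_same P
  have hC (k) : |C k j| ≤ |(V.det : ℝ)| := by
    simpa only [C, map_apply, ← Int.cast_abs, Int.cast_le] using hg k j
  refine le_of_mul_le_mul_left ?_ hdet
  calc (V.det : ℝ) ^ 2 * (Gᵀ * A * G) j j = ((P * C)ᵀ * A * (P * C)) j j := by
        simp [hPC, sq, mul_assoc]
    _ = (Cᵀ * (Pᵀ * A * P) * C) j j := by simp only [transpose_mul, Matrix.mul_assoc]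
    _ = Cᵀ j ⬝ᵥ (Pᵀ * A * P) *ᵥ Cᵀ j := mul_mul_apply ..
    _ ≤ (Fintype.card (Fin n) * |(V.det : ℝ)|) ^ 2 :=
        dotProduct_mulVec_le_card_mul_sq hPAP hdiag hC
    _ = (V.det : ℝ) ^ 2 * (n : ℝ) ^ 2 := by rw [Fintype.card_fin, mul_pow, sq_abs, mul_comm]

theorem inv_sqrt_le_rpow_half {D γ : ℝ} {N : ℕ} (hN : N ≠ 0) (hD : 0 < D)
    (h : D ^ (-(1 : ℝ) / N) ≤ γ) : (√D)⁻¹ ≤ γ ^ ((N : ℝ) / 2) := by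
  have hexp : -(1 : ℝ) / N * (N / 2) = -(1 / 2) := by field_simp
  calc (√D)⁻¹ = (D ^ (-(1 : ℝ) / N)) ^ ((N : ℝ) / 2) := by
        rw [← Real.rpow_mul hD.le, hexp, Real.rpow_neg hD.le, Real.sqrt_eq_rpow]
    _ ≤ γ ^ ((N : ℝ) / 2) := by gcongr

theorem stmt_12_general {N : ℕ} {A : Matrix (Fin N) (Fin N) ℝ} (hA : A.PosDef)
    (hspan : Submodule.span ℝ ((fun (v : Fin N → ℤ) i ↦ (v i : ℝ)) ''
      {v | (fun i ↦ (v i : ℝ)) ⬝ᵥ A *ᵥ (fun i ↦ (v i : ℝ)) ≤ 1}) = ⊤) :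
    ∃ g : SpecialLinearGroup (Fin N) ℤ, ∀ x : Fin N → ℝ,
      x ⬝ᵥ ((g.1.map (Int.cast : ℤ → ℝ))ᵀ * A * g.1.map (Int.cast : ℤ → ℝ)) *ᵥ x ≤ 1 →
        ∀ i, |x i| ≤ (N : ℝ) ^ (N - 1) / √A.det := by
  obtain ⟨V, hV, hV_le⟩ := exists_det_ne_zero_forall_col_mem ℝ hspan
  obtain ⟨g, hg⟩ := exists_specialLinearGroup_diag_le_sq hA.posSemidef hV fun j ↦ by
    rw [mul_mul_apply]
    exact hV_le j
  set G := g.1.map (Int.cast : ℤ → ℝ)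
  have det_G : G.det = 1 := by rw [← Int.cast_det, g.2, Int.cast_one]
  have hGAG : (Gᵀ * A * G).PosDef := by
    simpa using hA.conjTranspose_mul_mul_same
      (mulVec_injective_of_isUnit ((isUnit_iff_isUnit_det G).mpr (by simp [det_G])))
  refine ⟨g, fun x hx i ↦ ?_⟩
  simpa [det_G] using abs_le_pow_div_sqrt_det hGAG N.cast_nonneg hg hx i

theorem stmt_12 {N : ℕ} (hN : 2 ≤ N) (γ : ℝ)
    (hγ : IsLUB {r : ℝ | ∃ B : Matrix (Fin N) (Fin N) ℝ, B.PosDef ∧ ∃ m : ℝ,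
        IsLeast {q : ℝ | ∃ v : Fin N → ℤ, v ≠ 0 ∧
          (fun i => (v i : ℝ)) ⬝ᵥ B.mulVec (fun i => (v i : ℝ)) = q} m ∧
        r = m * B.det ^ (-(1 : ℝ) / N)} γ)
    (A : Matrix (Fin N) (Fin N) ℝ) (hA : A.PosDef)
    (hmin : IsLeast {q : ℝ | ∃ v : Fin N → ℤ, v ≠ 0 ∧
      (fun i => (v i : ℝ)) ⬝ᵥ A.mulVec (fun i => (v i : ℝ)) = q} 1)
    (hspan : Submodule.span ℝ {x : Fin N → ℝ | ∃ v : Fin N → ℤ, v ≠ 0 ∧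
      (fun i => (v i : ℝ)) ⬝ᵥ A.mulVec (fun i => (v i : ℝ)) = 1 ∧
      x = fun i => (v i : ℝ)} = ⊤) :
    ∃ g : Matrix.SpecialLinearGroup (Fin N) ℤ,
      ∀ v : Fin N → ℤ, v ≠ 0 →
        (fun i => (v i : ℝ)) ⬝ᵥ
          ((((g : Matrix (Fin N) (Fin N) ℤ).map (Int.cast : ℤ → ℝ))ᵀ * A *
            ((g : Matrix (Fin N) (Fin N) ℤ).map (Int.cast : ℤ → ℝ))).mulVec
            (fun i => (v i : ℝ))) = 1 →
        ∀ i, |(v i : ℝ)| ≤ (N : ℝ) ^ (N - 1) * γ ^ ((N : ℝ) / 2) := by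
  have hdet : A.det ^ (-(1 : ℝ) / N) ≤ γ := hγ.1 ⟨A, hA, 1, hmin, (one_mul _).symm⟩
  obtain ⟨g, hg⟩ := stmt_12_general hA <| top_unique <| hspan.ge.trans <| Submodule.span_mono <| by
    rintro _ ⟨v, -, hv, rfl⟩
    exact ⟨v, hv.le, rfl⟩
  refine ⟨g, fun v _ hv i ↦ (hg _ hv.le i).trans ?_⟩
  rw [div_eq_mul_inv]
  gcongr
  exact inv_sqrt_le_rpow_half (by lia) hA.det_pos hdet
end

section
/- Let (C_•, ∂) be a chain complex of free finitely generated ℤ-modules with chosen bases Σ_k of C_k, and write ∂(σ) = ∑_{σ'∈Σ_k} n_{σσ'} σ' for σ ∈ Σ_{k+1}. Let a(k) = min(card Σ_{k+1}, card Σ_k) and b(k) = max(1, sup_{σ∈Σ_{k+1}} (∑_{σ'} n_{σσ'}²)^{1/2}). Then card(H_k(C_•)_tors) ≤ b(k)^{a(k)}. -/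
open scoped BigOperators

/-!
Let `L` be the subgroup of `ℤ^S` spanned by the rows of `n`. For a subgroup `Z` the quotient
`Z / (Z ∩ L)` embeds into `ℤ^S / L`, so it suffices to bound the torsion of the latter. Choose rows
`n σ`, `σ ∈ I`, that are independent and as many as the rank of `L`, and standard basis vectors
`e j`, `j ∈ J`, that are independent modulo `L` and as many as the rank of `ℤ^S / L`. The classes of
the `e j` span a free subgroup, which meets the torsion of `ℤ^S / L` trivially, so the order of the
torsion is at most the index in `ℤ^S` of the span of the `n σ` and `e j` together. This index is a
determinant, and Hadamard's inequality bounds it by the product of the norms of the `n σ`, since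
the `e j` have norm one.
-/

open Module Submodule

section Torsion

variable {R M P : Type*} [CommRing R] [AddCommGroup M] [Module R M] [AddCommGroup P] [Module R P]

lemma map_mem_torsion (f : M →ₗ[R] P) {x : M} (hx : x ∈ torsion R M) : f x ∈ torsion R P := by
  obtain ⟨r, hr⟩ := (mem_torsion_iff x).1 hx
  have hfr : r • f x = f (r • x) := (f.map_smul (r : R) x).symm
  exact (mem_torsion_iff _).2 ⟨r, by rw [hfr, hr, map_zero]⟩

lemma card_torsion_le_of_injective {f : M →ₗ[R] P} (hf : Function.Injective f)
    [Finite (torsion R P)] : Nat.card (torsion R M) ≤ Nat.card (torsion R P) :=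
  Nat.card_le_card_of_injective
    (f.restrict fun _ hx ↦ map_mem_torsion f hx) fun _ _ hxy ↦
      Subtype.ext (hf (congrArg Subtype.val hxy))

lemma card_torsion_quotient_comap_subtype_le (L Z : Submodule R M) [Finite (torsion R (M ⧸ L))] :
    Nat.card (torsion R (Z ⧸ L.comap Z.subtype)) ≤ Nat.card (torsion R (M ⧸ L)) := by
  refine card_torsion_le_of_injective (f := mapQ _ L Z.subtype le_rfl) ?_
  rw [← LinearMap.ker_eq_bot, ker_mapQ, mkQ_map_self]

lemma disjoint_torsion_of_isTorsionFree (F : Submodule R M) [IsTorsionFree R F] :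
    Disjoint (torsion R M) F := by
  refine disjoint_def.2 fun x hx hxF ↦ ?_
  obtain ⟨r, hr⟩ := (mem_torsion_iff x).1 hx
  have hregular : IsSMulRegular F (r : R) :=
    IsTorsionFree.isSMulRegular (isRegular_iff_mem_nonZeroDivisors.2 r.2)
  have hzero : (⟨x, hxF⟩ : F) = 0 := hregular.right_eq_zero_of_smul (Subtype.ext hr)
  exact congrArg Subtype.val hzero

lemma card_torsion_le_card_quotient (F : Submodule R M) [IsTorsionFree R F]
    [Finite (M ⧸ F)] : Nat.card (torsion R M) ≤ Nat.card (M ⧸ F) := by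
  refine Nat.card_le_card_of_injective (F.mkQ ∘ₗ (torsion R M).subtype) ?_
  rw [← LinearMap.ker_eq_bot, LinearMap.ker_comp, ker_mkQ, ← disjoint_iff_comap_eq_bot]
  exact disjoint_torsion_of_isTorsionFree F

lemma card_torsion_quotient_le_card_quotient (L N : Submodule R M)
    [IsTorsionFree R (N.map L.mkQ)] [Finite (M ⧸ N)] :
    Nat.card (torsion R (M ⧸ L)) ≤ Nat.card (M ⧸ N) := by
  let π : (M ⧸ N) →ₗ[R] (M ⧸ L) ⧸ N.map L.mkQ := mapQ N (N.map L.mkQ) L.mkQ (le_comap_map _ _)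
  have hπ : Function.Surjective π := by
    rw [← LinearMap.range_eq_top, range_mapQ, range_mkQ, Submodule.map_top, range_mkQ]
  have : Finite ((M ⧸ L) ⧸ N.map L.mkQ) := .of_surjective π hπ
  exact (card_torsion_le_card_quotient _).trans (Nat.card_le_card_of_surjective π hπ)

end Torsion

section Span

variable {R M ι κ : Type*} [Ring R] [AddCommGroup M] [Module R M]

lemma range_eq_span_range_apply_single [Finite ι] [DecidableEq ι] (f : (ι → R) →ₗ[R] M) :
    LinearMap.range f = span R (Set.range fun i ↦ f (Pi.single i 1)) := by
  rw [LinearMap.range_eq_map, ← (Pi.basisFun R ι).span_eq, map_span, ← Set.range_comp]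
  simp only [Function.comp_def, Pi.basisFun_apply]

lemma map_mkQ_span_range_sumElim {L : Submodule R M} {u : ι → M} (hu : ∀ i, u i ∈ L) (v : κ → M) :
    (span R (Set.range (Sum.elim u v))).map L.mkQ = span R (Set.range (L.mkQ ∘ v)) := by
  have hker : (span R (Set.range u)).map L.mkQ = ⊥ := by
    rw [← LinearMap.le_ker_iff_map, ker_mkQ]
    exact span_le.2 (Set.range_subset_iff.2 hu)
  rw [Set.Sum.elim_range, span_union, Submodule.map_sup, hker, bot_sup_eq, map_span,
    ← Set.range_comp]

lemma isTorsionFree_span_range {v : ι → M} (hv : LinearIndependent R v) :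
    IsTorsionFree R (span R (Set.range v)) :=
  have := Free.of_basis (Basis.span hv)
  inferInstance

end Span

section Rank

variable {R M ι κ : Type*} [CommRing R] [IsDomain R] [AddCommGroup M] [Module R M]

lemma isTorsion_quotient_of_smul_mem {v : ι → M} (hv : span R (Set.range v) = ⊤)
    {N : Submodule R M} (hN : ∀ i, ∃ a : R, a ≠ 0 ∧ a • v i ∈ N) : IsTorsion R (M ⧸ N) := by
  have hmem (i : ι) : v i ∈ (torsion R (M ⧸ N)).comap N.mkQ := by
    obtain ⟨a, ha, hai⟩ := hN i
    exact (mem_torsion_iff _).2 ⟨⟨a, mem_nonZeroDivisors_of_ne_zero ha⟩,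
      (Quotient.mk_eq_zero N).2 hai⟩
  have hle : ⊤ ≤ (torsion R (M ⧸ N)).comap N.mkQ :=
    hv ▸ span_le.2 (Set.range_subset_iff.2 hmem)
  intro x
  obtain ⟨y, rfl⟩ := N.mkQ_surjective x
  exact (mem_torsion_iff _).1 (hle mem_top)

lemma exists_linearIndepOn_card_eq_finrank [Finite ι] {v : ι → M} (hv : span R (Set.range v) = ⊤) :
    ∃ s : Finset ι, LinearIndepOn R v s ∧ s.card = finrank R M := by
  obtain ⟨s, hs, hmax⟩ := exists_maximal_linearIndepOn R v
  lift s to Finset ι using s.toFinite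
  have : Module.Finite R M := ⟨hv ▸ fg_span (Set.finite_range v)⟩
  have htors : IsTorsion R (M ⧸ span R (v '' s)) := by
    refine isTorsion_quotient_of_smul_mem hv fun i ↦ ?_
    by_cases hi : i ∈ s
    · exact ⟨1, one_ne_zero, by simpa using subset_span (Set.mem_image_of_mem v hi)⟩
    · exact hmax i hi
  have hspan : finrank R (span R (v '' s)) = s.card := by
    rw [Set.image_eq_range, finrank_span_eq_card hs]
    simp
  refine ⟨s, hs, ?_⟩
  rw [← finrank_quotient_add_finrank (span R (v '' s)), htors.finrank_eq_zero, hspan, zero_add]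

lemma exists_linearIndependent_sumElim_card_eq_finrank [Finite ι] [Finite κ]
    (u : ι → M) {v : κ → M} (hv : span R (Set.range v) = ⊤) :
    ∃ (I : Finset ι) (J : Finset κ),
      LinearIndependent R (Sum.elim (fun i : I ↦ u i) (fun j : J ↦ v j)) ∧
      LinearIndepOn R ((span R (Set.range u)).mkQ ∘ v) J ∧
      I.card + J.card = finrank R M := by
  set L := span R (Set.range u)
  have : Module.Finite R M := ⟨hv ▸ fg_span (Set.finite_range v)⟩
  let u' : ι → L := fun i ↦ ⟨u i, subset_span ⟨i, rfl⟩⟩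
  have hu' : span R (Set.range u') = ⊤ := span_range_subtype_eq_top_iff _ _ |>.2 rfl
  have hv' : span R (Set.range (L.mkQ ∘ v)) = ⊤ := by
    rw [Set.range_comp, span_image, hv, Submodule.map_top, range_mkQ]
  obtain ⟨I, hI, hIcard⟩ := exists_linearIndepOn_card_eq_finrank hu'
  obtain ⟨J, hJ, hJcard⟩ := exists_linearIndepOn_card_eq_finrank hv'
  refine ⟨I, J, LinearIndependent.sumElim_of_quotient hI _ hJ, hJ, ?_⟩
  rw [hIcard, hJcard, add_comm, finrank_quotient_add_finrank]

end Rank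

section Hadamard

variable {ι E : Type*} [Fintype ι] [DecidableEq ι]

lemma abs_orthonormalBasis_det_le_prod_norm [NormedAddCommGroup E] [InnerProductSpace ℝ E]
    (b : OrthonormalBasis ι ℝ E) (v : ι → E) : |b.toBasis.det v| ≤ ∏ i, ‖v i‖ := by
  let e := Fintype.equivFin ι
  have : Fact (finrank ℝ E = Fintype.card ι) := ⟨finrank_eq_card_basis b.toBasis⟩
  have h := (b.reindex e).toBasis.orientation.abs_volumeForm_apply_le (v ∘ e.symm)
  rw [Orientation.volumeForm_robust' _ (b.reindex e), OrthonormalBasis.reindex_toBasis,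
    Basis.det_reindex] at h
  simpa [Function.comp_assoc, e.symm.prod_comp fun i ↦ ‖v i‖] using h

lemma abs_det_le_prod_sqrt_sum_sq (A : Matrix ι ι ℝ) : |A.det| ≤ ∏ i, √(∑ j, A i j ^ 2) := by
  have h := abs_orthonormalBasis_det_le_prod_norm (EuclideanSpace.basisFun ι ℝ)
    fun i ↦ WithLp.toLp 2 (A i)
  have hdet : (EuclideanSpace.basisFun ι ℝ).toBasis.det (fun i ↦ WithLp.toLp 2 (A i)) = A.det := by
    rw [Basis.det_apply, ← Matrix.det_transpose A]
    rfl
  simpa [hdet, EuclideanSpace.norm_eq] using h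

end Hadamard

section Index

variable {ι M : Type*} [Fintype ι] [AddCommGroup M]

lemma finite_quotient_span_range [Free ℤ M] [Module.Finite ℤ M] {v : ι → M}
    (hv : LinearIndependent ℤ v) (hcard : Fintype.card ι = finrank ℤ M) :
    Finite (M ⧸ span ℤ (Set.range v)) :=
  finiteQuotientOfFreeOfRankEq _ ((finrank_span_eq_card hv).trans hcard)

lemma card_quotient_span_eq_natAbs_det [DecidableEq ι] (b : Basis ι ℤ M) {v : ι → M}
    (hv : LinearIndependent ℤ v) :
    Nat.card (M ⧸ span ℤ (Set.range v)) = (b.det v).natAbs := by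
  have := Free.of_basis b
  have := Module.Finite.of_basis b
  have hbasis : (↑) ∘ Basis.span hv = v :=
    funext fun i ↦ congrArg Subtype.val (Basis.span_apply hv i)
  rw [← natAbs_det_basis_change b _ (Basis.span hv), hbasis]

lemma card_quotient_span_le_prod_sqrt_sum_sq {S : Type*} [Fintype S] {v : ι → S → ℤ}
    (hv : LinearIndependent ℤ v) (hcard : Fintype.card ι = Fintype.card S) :
    (Nat.card ((S → ℤ) ⧸ span ℤ (Set.range v)) : ℝ) ≤ ∏ i, √(∑ j, (v i j : ℝ) ^ 2) := by
  classical
  let e : S ≃ ι := (Fintype.equivOfCardEq hcard).symm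
  have hdet := card_quotient_span_eq_natAbs_det (Pi.basisFun ℤ S) (hv.comp e e.injective)
  rw [e.surjective.range_comp, Pi.basisFun_det_apply] at hdet
  rw [hdet, Nat.cast_natAbs, Int.cast_abs, Int.cast_det,
    ← e.prod_comp fun i ↦ √(∑ j, (v i j : ℝ) ^ 2)]
  exact abs_det_le_prod_sqrt_sum_sq _

end Index

section TorsionBound

variable {S' S : Type*} [Fintype S]

lemma exists_linearIndepOn_card_torsion_le_prod_sqrt_sum_sq [Finite S'] (n : S' → S → ℤ) :
    ∃ I : Finset S', LinearIndepOn ℤ n I ∧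
      (Nat.card (torsion ℤ ((S → ℤ) ⧸ span ℤ (Set.range n))) : ℝ) ≤
        ∏ σ ∈ I, √(∑ σ', (n σ σ' : ℝ) ^ 2) := by
  classical
  let e : S → S → ℤ := Pi.basisFun ℤ S
  obtain ⟨I, J, hindep, hJ, hcard⟩ :=
    exists_linearIndependent_sumElim_card_eq_finrank n (v := e) (Pi.basisFun ℤ S).span_eq
  replace hcard : Fintype.card (I ⊕ J) = finrank ℤ (S → ℤ) := by simpa using hcard
  set L := span ℤ (Set.range n)
  set w : I ⊕ J → S → ℤ := Sum.elim (fun σ ↦ n σ) (fun j ↦ e j)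
  have : IsTorsionFree ℤ ((span ℤ (Set.range w)).map L.mkQ) := by
    rw [map_mkQ_span_range_sumElim fun σ : I ↦ subset_span (Set.mem_range_self σ.1)]
    exact isTorsionFree_span_range hJ
  have := finite_quotient_span_range hindep hcard
  refine ⟨I, hindep.comp Sum.inl Sum.inl_injective, ?_⟩
  calc (Nat.card (torsion ℤ ((S → ℤ) ⧸ L)) : ℝ)
      ≤ Nat.card ((S → ℤ) ⧸ span ℤ (Set.range w)) :=
        mod_cast card_torsion_quotient_le_card_quotient L _
    _ ≤ ∏ i, √(∑ j, (w i j : ℝ) ^ 2) :=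
        card_quotient_span_le_prod_sqrt_sum_sq hindep (by simpa using hcard)
    _ = ∏ σ ∈ I, √(∑ σ', (n σ σ' : ℝ) ^ 2) := by
        rw [Fintype.prod_sum_type, ← Finset.prod_coe_sort I]
        simp [w, e, Pi.single_apply]

theorem stmt_16_general [Fintype S'] (n : S' → S → ℤ) (Z : Submodule ℤ (S → ℤ)) :
    (Nat.card (torsion ℤ (Z ⧸ (span ℤ (Set.range n)).comap Z.subtype)) : ℝ) ≤
      max 1 (⨆ σ, √(∑ σ', (n σ σ' : ℝ) ^ 2)) ^ min (Fintype.card S') (Fintype.card S) := by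
  set L := span ℤ (Set.range n)
  set b := max 1 (⨆ σ, √(∑ σ', (n σ σ' : ℝ) ^ 2))
  obtain ⟨I, hI, hprod⟩ := exists_linearIndepOn_card_torsion_le_prod_sqrt_sum_sq n
  have hIcard : I.card ≤ min (Fintype.card S') (Fintype.card S) :=
    le_min I.card_le_univ (by simpa using hI.fintype_card_le_finrank)
  have hnorm (σ : S') : √(∑ σ', (n σ σ' : ℝ) ^ 2) ≤ b :=
    le_max_of_le_right (le_ciSup (f := fun σ ↦ √(∑ σ', (n σ σ' : ℝ) ^ 2))
      (Set.finite_range _).bddAbove σ)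
  have : Finite (torsion ℤ ((S → ℤ) ⧸ L)) := finite_of_fg_torsion _ (torsion_isTorsion ..)
  calc (Nat.card (torsion ℤ (Z ⧸ L.comap Z.subtype)) : ℝ)
      ≤ Nat.card (torsion ℤ ((S → ℤ) ⧸ L)) := mod_cast card_torsion_quotient_comap_subtype_le L Z
    _ ≤ ∏ σ ∈ I, √(∑ σ', (n σ σ' : ℝ) ^ 2) := hprod
    _ ≤ ∏ _σ ∈ I, b := Finset.prod_le_prod (fun _ _ ↦ Real.sqrt_nonneg _) fun σ _ ↦ hnorm σ
    _ = b ^ I.card := Finset.prod_const b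
    _ ≤ b ^ min (Fintype.card S') (Fintype.card S) :=
        pow_le_pow_right₀ (le_max_left _ _) hIcard

end TorsionBound

theorem stmt_16 {S' S T : Type*} [Fintype S'] [Fintype S] [Fintype T] [DecidableEq S']
    (n : S' → S → ℤ)
    (d2 : (S' → ℤ) →ₗ[ℤ] (S → ℤ)) (hd2 : ∀ σ : S', d2 (Pi.single σ 1) = n σ)
    (d1 : (S → ℤ) →ₗ[ℤ] (T → ℤ)) (hcc : d1 ∘ₗ d2 = 0)
    (a : ℕ) (ha : a = min (Fintype.card S') (Fintype.card S))
    (b : ℝ) (hb : b = max 1 (⨆ σ : S', Real.sqrt (∑ σ', (n σ σ' : ℝ) ^ 2))) :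
    (Nat.card (Submodule.torsion ℤ
      ((LinearMap.ker d1) ⧸
        Submodule.comap (LinearMap.ker d1).subtype (LinearMap.range d2))) : ℝ)
      ≤ b ^ a := by
  rw [range_eq_span_range_apply_single, funext hd2, ha, hb]
  exact stmt_16_general n (LinearMap.ker d1)
end
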